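/- For every ribbon a with n nodes there exists an extension of a having at most n/2 + 1 critical points in the open unit disk; that is, γ(a) ≤ n/2 + 1. -/

import Mathlib

open scoped RealInnerProductSpace

noncomputable section

abbrev E2 : Type := EuclideanSpace ℝ (Fin 2)

/-- The point (cos t, sin t) on the unit circle in ℝ². -/
def sphPt (t : ℝ) : E2 := (EuclideanSpace.equiv (Fin 2) ℝ).symm ![Real.cos t, Real.sin t]

/-- A ribbon with `n` nodes, encoded via the angle parametrization `g = φ ∘ (cos, sin)`
of a C^∞ function `φ : S¹ → ℝ` whose critical points on the circle are exactly the `n`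
nondegenerate local extrema (nodes) at angles `θ 0 < θ 1 < ⋯ < θ (n-1)` in `[0, 2π)`,
with pairwise distinct critical values, together with a marking `ν` of the nodes by `±1`. -/
structure Ribbon (n : ℕ) : Type where
  g : ℝ → ℝ
  θ : Fin n → ℝ
  ν : Fin n → ℤ
  n_even : Even n
  n_pos : 0 < n
  smooth_g : ContDiff ℝ (⊤ : ℕ∞) g
  periodic_g : Function.Periodic g (2 * Real.pi)
  theta_mem : ∀ i, θ i ∈ Set.Ico (0 : ℝ) (2 * Real.pi)
  theta_mono : StrictMono θ
  node_crit : ∀ i, deriv g (θ i) = 0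
  node_nondeg : ∀ i, deriv (deriv g) (θ i) ≠ 0
  crit_only : ∀ t ∈ Set.Ico (0 : ℝ) (2 * Real.pi), deriv g t = 0 → ∃ i, t = θ i
  values_distinct : ∀ i j, g (θ i) = g (θ j) → i = j
  nu_sign : ∀ i, ν i = 1 ∨ ν i = -1

/-- The signature σ = s₊ − s₋ of a ribbon. -/
def Ribbon.sigma {n : ℕ} (a : Ribbon n) : ℤ := ∑ i, a.ν i

/-- Critical points of `f` in the open unit disk. -/
def critPts (f : E2 → ℝ) : Set E2 :=
  {x | x ∈ Metric.ball (0 : E2) 1 ∧ fderiv ℝ f x = 0}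

/-- `f : ℝ² → ℝ` is an extension of the ribbon `a`: it is C^∞, agrees with `φ` on the unit
circle, has nowhere-vanishing gradient on the circle, and at each node the radial derivative
`⟪∇f(p), p⟫` has sign `ν p` if `p` is a local maximum of `φ` (second derivative of `g`
negative there) and sign `−ν p` if `p` is a local minimum of `φ`. -/
def IsExtension {n : ℕ} (a : Ribbon n) (f : E2 → ℝ) : Prop :=
  ContDiff ℝ (⊤ : ℕ∞) f ∧
  (∀ t : ℝ, f (sphPt t) = a.g t) ∧
  (∀ x ∈ Metric.sphere (0 : E2) 1, fderiv ℝ f x ≠ 0) ∧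
  (∀ i : Fin n,
    (deriv (deriv a.g) (a.θ i) < 0 →
      0 < (a.ν i : ℝ) * ⟪gradient f (sphPt (a.θ i)), sphPt (a.θ i)⟫) ∧
    (0 < deriv (deriv a.g) (a.θ i) →
      (a.ν i : ℝ) * ⟪gradient f (sphPt (a.θ i)), sphPt (a.θ i)⟫ < 0))

/-- The ribbon invariant γ: the infimum, over all extensions `f` of `a`, of the number of
critical points of `f` in the open unit disk (a value in `ℕ∞`). -/
def gammaR {n : ℕ} (a : Ribbon n) : ℕ∞ :=
  sInf {k : ℕ∞ | ∃ f : E2 → ℝ, IsExtension a f ∧ (critPts f).encard = k}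

/-!
Split the critical points on the circle of `φ`, that is of `g`, into the set `U` where the radial
derivative is prescribed negative and the set `V` where it is prescribed positive. With `ρ = ‖x‖²`
and `c` large, the paraboloid `c (ρ - 1)` plus `φ`, cut off near the origin, has positive radial
derivative away from the origin. Over `U` this derivative is reversed near the circle by adding
`c w(ρ) B`, where `B` is a bump function of the angle, locally constant at the critical points of
`φ`, and `w` is uniformly small with `w(1) = 0` and `w'(1) = -2`. As `w` is small, every critical
point of the sum off the origin lies over a critical point of `φ`; as `w'` is strictly monotone,
there is at most one over each point of `U`, and there is none over `V`. This gives at most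
`#U + 1` critical points, or `#V + 1` by applying the construction to `-φ`, and the smaller of
`#U` and `#V` is at most `n / 2`.
-/

open Function Set Filter
open scoped Topology ContDiff

section Polar

/-- The identification of the plane with `ℂ`, through which polar angles are arguments. -/
def toComplex : E2 ≃ₗᵢ[ℝ] ℂ := Complex.orthonormalBasisOneI.repr.symm

/-- The polar angle, in `(-π, π]`, of a point of the plane; `0` at the origin. -/
def polarAngle (x : E2) : ℝ := Complex.arg (toComplex x)

/-- The function on the plane given in polar coordinates by `P`. The radial variable is the
squared radius, so that a smooth function of it alone lifts to a smooth function at the origin. -/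
def polarLift (P : ℝ → ℝ → ℝ) (x : E2) : ℝ := P (‖x‖ ^ 2) (polarAngle x)

lemma toComplex_sphPt (t : ℝ) : toComplex (sphPt t) = Complex.exp (t * Complex.I) := by
  simp [toComplex, sphPt, Complex.exp_mul_I]

lemma norm_sphPt (t : ℝ) : ‖sphPt t‖ = 1 := by
  rw [← toComplex.norm_map, toComplex_sphPt, Complex.norm_exp_ofReal_mul_I]

lemma periodic_sphPt : Periodic sphPt (2 * Real.pi) := fun t => by simp [sphPt]

lemma contDiff_sphPt : ContDiff ℝ ∞ sphPt := by
  refine contDiff_euclidean.2 fun i => ?_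
  fin_cases i
  · exact Real.contDiff_cos
  · exact Real.contDiff_sin

lemma norm_smul_sphPt_polarAngle (x : E2) : ‖x‖ • sphPt (polarAngle x) = x := by
  apply toComplex.injective
  rw [map_smul, toComplex_sphPt, Complex.real_smul, polarAngle,
    ← toComplex.norm_map x, Complex.norm_mul_exp_arg_mul_I]

lemma coe_polarAngle_smul_sphPt {r : ℝ} (hr : 0 < r) (t : ℝ) :
    (polarAngle (r • sphPt t) : Real.Angle) = t := by
  rw [polarAngle, map_smul, toComplex_sphPt, Complex.real_smul,
    Complex.arg_real_mul _ hr, Complex.arg_exp_mul_I, Real.Angle.coe_toIocMod]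

lemma coe_polarAngle_neg {x : E2} (hx : x ≠ 0) :
    (polarAngle (-x) : Real.Angle) = polarAngle x + Real.pi := by
  rw [polarAngle, map_neg]
  exact Complex.arg_neg_coe_angle ((map_ne_zero_iff toComplex toComplex.injective).2 hx)

lemma eq_of_periodic_of_coe_angle_eq {α : Type*} {g : ℝ → α} (hg : Periodic g (2 * Real.pi))
    {s t : ℝ} (hst : (s : Real.Angle) = t) : g s = g t :=
  congrArg hg.lift hst

lemma contDiffAt_polarAngle {x : E2} (hx : toComplex x ∈ Complex.slitPlane) :
    ContDiffAt ℝ ∞ polarAngle x := by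
  have hlog : ContDiffAt ℝ ∞ Complex.log (toComplex x) :=
    (Complex.contDiffAt_log hx).restrict_scalars ℝ
  have hangle : polarAngle = Complex.imCLM ∘ Complex.log ∘ toComplex := by
    ext y
    simp [polarAngle, Complex.log_im]
  rw [hangle]
  exact Complex.imCLM.contDiff.contDiffAt.comp x (hlog.comp x toComplex.contDiff.contDiffAt)

lemma eq_of_periodic_of_sphPt_eq {α : Type*} {g : ℝ → α} (hg : Periodic g (2 * Real.pi))
    {s t : ℝ} (hst : sphPt s = sphPt t) : g s = g t := by
  apply eq_of_periodic_of_coe_angle_eq hg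
  rw [← coe_polarAngle_smul_sphPt one_pos s, hst, coe_polarAngle_smul_sphPt one_pos]

variable {P : ℝ → ℝ → ℝ}

lemma polarLift_smul_sphPt (hper : ∀ ρ, Periodic (P ρ) (2 * Real.pi)) {r : ℝ} (hr : 0 < r)
    (t : ℝ) : polarLift P (r • sphPt t) = P (r ^ 2) t := by
  rw [polarLift, norm_smul, norm_sphPt, mul_one, Real.norm_of_nonneg hr.le]
  exact eq_of_periodic_of_coe_angle_eq (hper _) (coe_polarAngle_smul_sphPt hr t)

lemma contDiffAt_polarLift (hP : ContDiff ℝ ∞ (uncurry P))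
    (hper : ∀ ρ, Periodic (P ρ) (2 * Real.pi)) {x : E2} (hx : x ≠ 0) :
    ContDiffAt ℝ ∞ (polarLift P) x := by
  have hnorm : ContDiffAt ℝ ∞ (fun y : E2 => ‖y‖ ^ 2) x := (contDiff_norm_sq ℝ).contDiffAt
  have hz : toComplex x ≠ 0 := (map_ne_zero_iff toComplex toComplex.injective).2 hx
  rcases Complex.mem_slitPlane_or_neg_mem_slitPlane hz with hslit | hslit
  · exact hP.contDiffAt.comp x (hnorm.prodMk (contDiffAt_polarAngle hslit))
  · have hangle : ContDiffAt ℝ ∞ (fun y => polarAngle (-y) + Real.pi) x :=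
      ((contDiffAt_polarAngle (by rwa [map_neg])).comp x contDiffAt_id.neg).add contDiffAt_const
    refine (hP.contDiffAt.comp x (hnorm.prodMk hangle)).congr_of_eventuallyEq ?_
    filter_upwards [isOpen_ne.mem_nhds hx] with y hy
    refine eq_of_periodic_of_coe_angle_eq (hper _) ?_
    rw [Real.Angle.coe_add, coe_polarAngle_neg hy, add_assoc, Real.Angle.coe_pi_add_coe_pi,
      add_zero]

lemma contDiff_polarLift (hP : ContDiff ℝ ∞ (uncurry P))
    (hper : ∀ ρ, Periodic (P ρ) (2 * Real.pi)) {k : ℝ → ℝ} (hk : ContDiff ℝ ∞ k)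
    (hPk : ∀ᶠ ρ in 𝓝 0, ∀ t, P ρ t = k ρ) : ContDiff ℝ ∞ (polarLift P) := by
  refine contDiff_iff_contDiffAt.2 fun x => ?_
  by_cases hx : x = 0
  · subst hx
    have htendsto : Tendsto (fun y : E2 => ‖y‖ ^ 2) (𝓝 0) (𝓝 0) :=
      Continuous.tendsto' (by fun_prop) _ _ (by simp)
    exact (hk.comp (contDiff_norm_sq ℝ)).contDiffAt.congr_of_eventuallyEq
      ((htendsto.eventually hPk).mono fun y hy => hy _)
  · exact contDiffAt_polarLift hP hper hx

lemma smul_sphPt_ne_zero {r : ℝ} (hr : 0 < r) (t : ℝ) : r • sphPt t ≠ 0 :=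
  smul_ne_zero hr.ne' (norm_ne_zero_iff.1 (by simp [norm_sphPt]))

lemma fderiv_polarLift_sphPt (hP : ContDiff ℝ ∞ (uncurry P))
    (hper : ∀ ρ, Periodic (P ρ) (2 * Real.pi)) {r : ℝ} (hr : 0 < r) (t : ℝ) :
    fderiv ℝ (polarLift P) (r • sphPt t) (sphPt t) = deriv (fun ρ => P ρ t) (r ^ 2) * (2 * r) := by
  have hdiff : DifferentiableAt ℝ (polarLift P) (r • sphPt t) :=
    (contDiffAt_polarLift hP hper (smul_sphPt_ne_zero hr t)).differentiableAt (by simp)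
  have hray : HasDerivAt (fun s : ℝ => s • sphPt t) (sphPt t) r := by
    simpa using (hasDerivAt_id r).smul_const (sphPt t)
  have hsq : HasDerivAt (fun s : ℝ => s ^ 2) (2 * r) r := by simpa using hasDerivAt_pow 2 r
  have hradial : ContDiff ℝ ∞ fun ρ => P ρ t := hP.comp (contDiff_id.prodMk contDiff_const)
  refine (hdiff.hasFDerivAt.comp_hasDerivAt r hray).unique (HasDerivAt.congr_of_eventuallyEq
    (HasDerivAt.comp r (h := fun s => s ^ 2)
      (hradial.differentiable (by simp) _).hasDerivAt hsq) ?_)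
  filter_upwards [lt_mem_nhds hr] with s hs
  exact polarLift_smul_sphPt hper hs t

lemma fderiv_polarLift_deriv_sphPt (hP : ContDiff ℝ ∞ (uncurry P))
    (hper : ∀ ρ, Periodic (P ρ) (2 * Real.pi)) {r : ℝ} (hr : 0 < r) (t : ℝ) :
    fderiv ℝ (polarLift P) (r • sphPt t) (r • deriv sphPt t) = deriv (P (r ^ 2)) t := by
  have hdiff : DifferentiableAt ℝ (polarLift P) (r • sphPt t) :=
    (contDiffAt_polarLift hP hper (smul_sphPt_ne_zero hr t)).differentiableAt (by simp)
  have hcircle : HasDerivAt (fun s : ℝ => r • sphPt s) (r • deriv sphPt t) t :=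
    (contDiff_sphPt.differentiable (by simp) t).hasDerivAt.const_smul r
  have hlift : P (r ^ 2) = polarLift P ∘ fun s => r • sphPt s :=
    funext fun s => (polarLift_smul_sphPt hper hr s).symm
  rw [hlift]
  exact (hdiff.hasFDerivAt.comp_hasDerivAt t hcircle).deriv.symm

lemma deriv_eq_zero_of_fderiv_polarLift_eq_zero (hP : ContDiff ℝ ∞ (uncurry P))
    (hper : ∀ ρ, Periodic (P ρ) (2 * Real.pi)) {x : E2} (hx : x ≠ 0)
    (hcrit : fderiv ℝ (polarLift P) x = 0) :
    deriv (fun ρ => P ρ (polarAngle x)) (‖x‖ ^ 2) = 0 ∧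
      deriv (P (‖x‖ ^ 2)) (polarAngle x) = 0 := by
  have hnorm : 0 < ‖x‖ := norm_pos_iff.2 hx
  have hradial := fderiv_polarLift_sphPt hP hper hnorm (polarAngle x)
  have hangular := fderiv_polarLift_deriv_sphPt hP hper hnorm (polarAngle x)
  rw [norm_smul_sphPt_polarAngle, hcrit, zero_apply] at hradial hangular
  exact ⟨(mul_eq_zero.1 hradial.symm).resolve_right (by positivity), hangular.symm⟩

end Polar

section AngularBump

lemma periodic_deriv {F : Type*} [NormedAddCommGroup F] [NormedSpace ℝ F] {g : ℝ → F} {T : ℝ}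
    (hg : Periodic g T) : Periodic (deriv g) T := fun t => by
  rw [← deriv_comp_add_const, show (fun s => g (s + T)) = g from funext hg]

lemma exists_forall_abs_le_of_periodic {u : ℝ → ℝ} {T : ℝ} (hT : T ≠ 0) (hu : Continuous u)
    (hper : Periodic u T) : ∃ C, ∀ t, |u t| ≤ C := by
  simpa using isBounded_iff_forall_norm_le.1 (hper.isBounded_of_continuous hT hu)

lemma exists_forall_abs_le_mul_abs_of_periodic {u v : ℝ → ℝ} {T : ℝ} (hT : T ≠ 0)
    (hu : Continuous u) (hv : Continuous v) (hu' : Periodic u T) (hv' : Periodic v T)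
    (huv : ∀ t, v t = 0 → ∀ᶠ s in 𝓝 t, u s = 0) : ∃ C, ∀ t, |u t| ≤ C * |v t| := by
  have hquot : Continuous (u / v) := continuous_iff_continuousAt.2 fun t => by
    by_cases ht : v t = 0
    · refine (continuousAt_const (y := (0 : ℝ))).congr ?_
      filter_upwards [huv t ht] with s hs
      rw [Pi.div_apply, hs, zero_div]
    · exact hu.continuousAt.div hv.continuousAt ht
  obtain ⟨C, hC⟩ := exists_forall_abs_le_of_periodic hT hquot (hu'.div hv')
  refine ⟨C, fun t => ?_⟩
  by_cases ht : v t = 0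
  · simp [ht, (huv t ht).self_of_nhds]
  · have := hC t
    rwa [Pi.div_apply, abs_div, div_le_iff₀ (abs_pos.2 ht)] at this

open scoped Manifold in
lemma exists_contDiff_one_zero_of_isClosed {E : Type*} [NormedAddCommGroup E] [NormedSpace ℝ E]
    [FiniteDimensional ℝ E] {U V : Set E} (hU : IsClosed U) (hV : IsClosed V)
    (hUV : Disjoint U V) :
    ∃ b : E → ℝ, ContDiff ℝ ∞ b ∧ (∀ x, b x ∈ Icc 0 1) ∧
      (∀ x ∈ U, b =ᶠ[𝓝 x] 1) ∧ (∀ x ∈ V, b =ᶠ[𝓝 x] 0) := by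
  obtain ⟨b, hV', hU', hb⟩ :=
    exists_contMDiffMap_zero_one_nhds_of_isClosed 𝓘(ℝ, E) (n := (⊤ : ℕ∞)) hV hU hUV.symm
  exact ⟨b, b.contMDiff.contDiff, hb, eventually_nhdsSet_iff_forall.1 hU',
    eventually_nhdsSet_iff_forall.1 hV'⟩

/-- A smooth `2π`-periodic function with values in `[0, 1]`, equal to `1` at the angles of points
of `U` and to `0` at those of `V`, whose derivative is controlled by that of `g`. -/
structure IsAngularBump (g : ℝ → ℝ) (U V : Set E2) (Q : ℝ) (B : ℝ → ℝ) : Prop where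
  contDiff : ContDiff ℝ ∞ B
  periodic : Periodic B (2 * Real.pi)
  mem_Icc : ∀ t, B t ∈ Icc 0 1
  eq_one : ∀ t, sphPt t ∈ U → B t = 1
  eq_zero : ∀ t, sphPt t ∈ V → B t = 0
  abs_deriv_le : ∀ t, |deriv B t| ≤ Q * |deriv g t|

lemma exists_isAngularBump {g : ℝ → ℝ} (hg : ContDiff ℝ ∞ g) (hper : Periodic g (2 * Real.pi))
    {U V : Set E2} (hU : IsClosed U) (hV : IsClosed V) (hUV : Disjoint U V)
    (hcrit : ∀ t, deriv g t = 0 → sphPt t ∈ U ∪ V) : ∃ Q B, IsAngularBump g U V Q B := by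
  obtain ⟨b, hb, hb01, hbU, hbV⟩ := exists_contDiff_one_zero_of_isClosed hU hV hUV
  have hB : ContDiff ℝ ∞ (b ∘ sphPt) := hb.comp contDiff_sphPt
  have hBper : Periodic (b ∘ sphPt) (2 * Real.pi) := periodic_sphPt.comp b
  have hflat (t : ℝ) (ht : deriv g t = 0) : ∀ᶠ s in 𝓝 t, deriv (b ∘ sphPt) s = 0 := by
    obtain ⟨c, hc⟩ : ∃ c : ℝ, b =ᶠ[𝓝 (sphPt t)] fun _ => c := by
      rcases hcrit t ht with h | h
      exacts [⟨1, hbU _ h⟩, ⟨0, hbV _ h⟩]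
    have hloc : b ∘ sphPt =ᶠ[𝓝 t] fun _ => c := contDiff_sphPt.continuous.continuousAt.eventually hc
    filter_upwards [hloc.deriv] with s hs
    rw [hs, deriv_const]
  obtain ⟨Q, hQ⟩ := exists_forall_abs_le_mul_abs_of_periodic Real.two_pi_pos.ne'
    (hB.continuous_deriv (by simp)) (hg.continuous_deriv (by simp)) (periodic_deriv hBper)
    (periodic_deriv hper) hflat
  exact ⟨Q, b ∘ sphPt, hB, hBper, fun _ => hb01 _, fun t ht => (hbU _ ht).self_of_nhds,
    fun t ht => (hbV _ ht).self_of_nhds, hQ⟩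

end AngularBump

section CollarModel

/-- A smooth cutoff in the squared radius: `0` up to `1 / 4` and `1` from `1 / 2` on. -/
def cutoff (ρ : ℝ) : ℝ := Real.smoothTransition (4 * ρ - 1)

lemma contDiff_cutoff : ContDiff ℝ ∞ cutoff :=
  Real.smoothTransition.contDiff.comp (by fun_prop)

lemma cutoff_of_le {ρ : ℝ} (hρ : ρ ≤ 1 / 4) : cutoff ρ = 0 :=
  Real.smoothTransition.zero_of_nonpos (by linarith)

lemma cutoff_of_ge {ρ : ℝ} (hρ : 1 / 2 ≤ ρ) : cutoff ρ = 1 :=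
  Real.smoothTransition.one_of_one_le (by linarith)

lemma cutoff_mem_Icc (ρ : ℝ) : cutoff ρ ∈ Icc 0 1 :=
  ⟨Real.smoothTransition.nonneg _, Real.smoothTransition.le_one _⟩

lemma deriv_cutoff_of_gt {ρ : ℝ} (hρ : 1 / 2 < ρ) : deriv cutoff ρ = 0 := by
  have hloc : cutoff =ᶠ[𝓝 ρ] fun _ => 1 := by
    filter_upwards [lt_mem_nhds hρ] with s hs using cutoff_of_ge hs.le
  rw [hloc.deriv_eq, deriv_const]

/-- The primitive of `-2ρ ^ M` vanishing at `ρ = 1`. For large `M` it is uniformly small on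
`[0, 1]` while its slope still sweeps strictly monotonically from `0` to `-2`. -/
def collarProfile (M : ℕ) (ρ : ℝ) : ℝ := 2 / (M + 1) * (1 - ρ ^ (M + 1))

lemma contDiff_collarProfile (M : ℕ) : ContDiff ℝ ∞ (collarProfile M) := by
  unfold collarProfile
  fun_prop

lemma hasDerivAt_collarProfile (M : ℕ) (ρ : ℝ) :
    HasDerivAt (collarProfile M) (-(2 * ρ ^ M)) ρ := by
  have h := ((hasDerivAt_pow (M + 1) ρ).const_sub 1).const_mul (2 / ((M : ℝ) + 1))
  convert! h using 1
  push_cast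
  field_simp

lemma collarProfile_one (M : ℕ) : collarProfile M 1 = 0 := by simp [collarProfile]

lemma collarProfile_mem_Icc (M : ℕ) {ρ : ℝ} (hρ : ρ ∈ Icc 0 1) :
    collarProfile M ρ ∈ Icc 0 (2 / (M + 1) : ℝ) := by
  have h0 : 0 ≤ ρ ^ (M + 1) := pow_nonneg hρ.1 _
  have h1 : ρ ^ (M + 1) ≤ 1 := pow_le_one₀ hρ.1 hρ.2
  exact ⟨mul_nonneg (by positivity) (by linarith),
    mul_le_of_le_one_right (by positivity) (by linarith)⟩

/-- The extension of `g`, in polar coordinates with squared radius `ρ`: a paraboloid of slope `c`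
carrying `g` on its outer part, whose radial slope near the circle is reversed where `B = 1`. -/
def collarModel (c : ℝ) (M : ℕ) (g B : ℝ → ℝ) (ρ t : ℝ) : ℝ :=
  cutoff ρ * (g t + c * collarProfile M ρ * B t) + c * (ρ - 1)

variable {c Q : ℝ} {M : ℕ} {g B : ℝ → ℝ} {U V : Set E2}

lemma contDiff_uncurry_collarModel (hg : ContDiff ℝ ∞ g) (hB : ContDiff ℝ ∞ B) :
    ContDiff ℝ ∞ (uncurry (collarModel c M g B)) := by
  have hcutoff := contDiff_cutoff
  have hprofile := contDiff_collarProfile M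
  unfold collarModel uncurry
  fun_prop

lemma periodic_collarModel {T : ℝ} (hg : Periodic g T) (hB : Periodic B T) (ρ : ℝ) :
    Periodic (collarModel c M g B ρ) T := fun t => by
  simp only [collarModel, hg t, hB t]

lemma collarModel_one (t : ℝ) : collarModel c M g B 1 t = g t := by
  simp [collarModel, collarProfile_one, cutoff_of_ge (show (1 / 2 : ℝ) ≤ 1 by norm_num)]

lemma contDiff_polarLift_collarModel (hg : ContDiff ℝ ∞ g) (hper : Periodic g (2 * Real.pi))
    (hB : ContDiff ℝ ∞ B) (hBper : Periodic B (2 * Real.pi)) :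
    ContDiff ℝ ∞ (polarLift (collarModel c M g B)) := by
  refine contDiff_polarLift (contDiff_uncurry_collarModel hg hB) (periodic_collarModel hper hBper)
    (k := fun ρ => c * (ρ - 1)) (by fun_prop) ?_
  filter_upwards [gt_mem_nhds (show (0 : ℝ) < 1 / 4 by norm_num)] with ρ hρ t
  rw [collarModel, cutoff_of_le hρ.le, zero_mul, zero_add]

lemma deriv_collarModel_radial (ρ t : ℝ) :
    deriv (fun ρ => collarModel c M g B ρ t) ρ =
      deriv cutoff ρ * (g t + c * collarProfile M ρ * B t)
        + c * (1 - 2 * cutoff ρ * ρ ^ M * B t) := by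
  have hcutoff : HasDerivAt cutoff (deriv cutoff ρ) ρ :=
    (contDiff_cutoff.differentiable (by simp) ρ).hasDerivAt
  have hprofile := (((hasDerivAt_collarProfile M ρ).const_mul c).mul_const (B t)).const_add (g t)
  have h := (hcutoff.mul hprofile).add (((hasDerivAt_id ρ).sub_const 1).const_mul c)
  refine h.deriv.trans ?_
  ring

lemma deriv_collarModel_radial_of_gt {ρ : ℝ} (hρ : 1 / 2 < ρ) (t : ℝ) :
    deriv (fun ρ => collarModel c M g B ρ t) ρ = c * (1 - 2 * ρ ^ M * B t) := by
  rw [deriv_collarModel_radial, deriv_cutoff_of_gt hρ, cutoff_of_ge hρ.le]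
  ring

lemma deriv_collarModel_angular_of_ge (hg : Differentiable ℝ g) (hB : Differentiable ℝ B)
    {ρ : ℝ} (hρ : 1 / 2 ≤ ρ) (t : ℝ) :
    deriv (collarModel c M g B ρ) t = deriv g t + c * collarProfile M ρ * deriv B t := by
  have h := ((hg t).hasDerivAt.add ((hB t).hasDerivAt.const_mul (c * collarProfile M ρ))).add_const
    (c * (ρ - 1))
  convert! h.deriv using 2
  ext s
  rw [collarModel, cutoff_of_ge hρ, one_mul]
  rfl

lemma deriv_collarModel_radial_pos {K G ρ t : ℝ} (hρ : ρ ∈ Icc 0 (1 / 2))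
    (hK : |deriv cutoff ρ| ≤ K) (hG : |g t| ≤ G) (hB : B t ∈ Icc 0 1) (hc : 0 < c)
    (hKG : 2 * (K * (G + 1)) ≤ c) (hM : 3 ≤ M) (hcM : 2 * c ≤ M + 1) :
    0 < deriv (fun ρ => collarModel c M g B ρ t) ρ := by
  have hprofile := collarProfile_mem_Icc M ⟨hρ.1, hρ.2.trans (by norm_num)⟩
  have hprofile_le : c * collarProfile M ρ ≤ 1 :=
    calc c * collarProfile M ρ ≤ c * (2 / (M + 1)) := by gcongr; exact hprofile.2
      _ ≤ 1 := by rw [mul_div_assoc', div_le_one (by positivity)]; linarith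
  have hbump : |c * collarProfile M ρ * B t| ≤ 1 := by
    rw [abs_of_nonneg (mul_nonneg (mul_nonneg hc.le hprofile.1) hB.1)]
    exact mul_le_one₀ hprofile_le hB.1 hB.2
  have hcutoff : |deriv cutoff ρ * (g t + c * collarProfile M ρ * B t)| ≤ c / 2 :=
    calc |deriv cutoff ρ * (g t + c * collarProfile M ρ * B t)|
        ≤ K * (G + 1) := by
          rw [abs_mul]
          have hK0 : 0 ≤ K := (abs_nonneg _).trans hK
          gcongr
          exact (abs_add_le _ _).trans (add_le_add hG hbump)
      _ ≤ c / 2 := by linarith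
  have hpow : ρ ^ M ≤ 1 / 8 :=
    calc ρ ^ M ≤ ρ ^ 3 := pow_le_pow_of_le_one hρ.1 (hρ.2.trans (by norm_num)) hM
      _ ≤ (1 / 2) ^ 3 := by gcongr; exacts [hρ.1, hρ.2]
      _ = 1 / 8 := by norm_num
  have hcollar : cutoff ρ * ρ ^ M * B t ≤ 1 / 8 :=
    calc cutoff ρ * ρ ^ M * B t ≤ 1 * (1 / 8) * 1 := by
          have hχ := cutoff_mem_Icc ρ
          have hρM : 0 ≤ ρ ^ M := pow_nonneg hρ.1 _
          gcongr
          exacts [hB.1, hχ.2, hB.2]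
      _ = 1 / 8 := by norm_num
  rw [deriv_collarModel_radial]
  nlinarith [neg_le_of_abs_le hcutoff]

lemma exists_collarModel_radial_pos (hg : Continuous g) {T : ℝ} (hT : T ≠ 0) (hper : Periodic g T)
    (hB : ∀ t, B t ∈ Icc 0 1) (Q : ℝ) :
    ∃ (c : ℝ) (M : ℕ), 0 < c ∧ M ≠ 0 ∧ 2 * c * Q < M + 1 ∧
      ∀ ρ ∈ Icc (0 : ℝ) (1 / 2), ∀ t, 0 < deriv (fun ρ => collarModel c M g B ρ t) ρ := by
  obtain ⟨K, hK⟩ := (isCompact_Icc (a := (0 : ℝ)) (b := 1 / 2)).exists_bound_of_continuousOn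
    (contDiff_cutoff.continuous_deriv (by simp)).continuousOn
  obtain ⟨G, hG⟩ := exists_forall_abs_le_of_periodic hT hg hper
  obtain ⟨c, hc⟩ := exists_gt (max 0 (2 * (K * (G + 1))))
  obtain ⟨hc0, hcK⟩ := max_lt_iff.1 hc
  obtain ⟨M, hM⟩ := exists_nat_gt (max 3 (max (2 * c) (2 * c * Q)))
  obtain ⟨hM3, hcM, hQM⟩ : 3 < (M : ℝ) ∧ 2 * c < M ∧ 2 * c * Q < M := by
    simpa only [max_lt_iff] using hM
  have hM3' : 3 < M := by exact_mod_cast hM3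
  exact ⟨c, M, hc0, by lia, by linarith, fun ρ hρ t => deriv_collarModel_radial_pos hρ (hK ρ hρ)
    (hG t) (hB t) hc0 hcK.le hM3'.le (by linarith)⟩

lemma deriv_eq_zero_of_deriv_collarModel_angular (hg : Differentiable ℝ g)
    (hB : Differentiable ℝ B) {t : ℝ} (hBQ : |deriv B t| ≤ Q * |deriv g t|) (hc : 0 < c)
    (hQ : 2 * c * Q < M + 1) {ρ : ℝ} (hρ : ρ ∈ Icc (1 / 2) 1)
    (h : deriv (collarModel c M g B ρ) t = 0) : deriv g t = 0 := by
  rw [deriv_collarModel_angular_of_ge hg hB hρ.1] at h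
  have hprofile := collarProfile_mem_Icc M ⟨le_trans (by norm_num) hρ.1, hρ.2⟩
  by_contra hne
  have hpos : 0 < |deriv g t| := abs_pos.2 hne
  refine lt_irrefl |deriv g t| ?_
  calc |deriv g t| = c * collarProfile M ρ * |deriv B t| := by
        rw [eq_neg_of_add_eq_zero_left h, abs_neg, abs_mul,
          abs_of_nonneg (mul_nonneg hc.le hprofile.1)]
    _ ≤ c * (2 / (M + 1)) * (Q * |deriv g t|) := by
        gcongr
        exact hprofile.2
    _ = 2 * c * Q / (M + 1) * |deriv g t| := by ring
    _ < 1 * |deriv g t| :=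
        mul_lt_mul_of_pos_right ((div_lt_one (by positivity)).2 hQ) hpos
    _ = |deriv g t| := one_mul _

lemma mem_and_pow_eq_of_deriv_collarModel_eq_zero (hg : Differentiable ℝ g)
    (hcrit : ∀ t, deriv g t = 0 → sphPt t ∈ U ∪ V) (hB : IsAngularBump g U V Q B) (hc : 0 < c)
    (hQ : 2 * c * Q < M + 1)
    (hinner : ∀ ρ ∈ Icc (0 : ℝ) (1 / 2), ∀ t, 0 < deriv (fun ρ => collarModel c M g B ρ t) ρ)
    {ρ t : ℝ} (hρ : ρ ∈ Icc 0 1) (hradial : deriv (fun ρ => collarModel c M g B ρ t) ρ = 0)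
    (hangular : deriv (collarModel c M g B ρ) t = 0) : sphPt t ∈ U ∧ ρ ^ M = 1 / 2 := by
  have hρ' : 1 / 2 < ρ := by
    by_contra! hle
    exact (hinner ρ ⟨hρ.1, hle⟩ t).ne' hradial
  have hgt : deriv g t = 0 := deriv_eq_zero_of_deriv_collarModel_angular hg
    (hB.contDiff.differentiable (by simp)) (hB.abs_deriv_le t) hc hQ ⟨hρ'.le, hρ.2⟩ hangular
  rw [deriv_collarModel_radial_of_gt hρ'] at hradial
  have hslope := (mul_eq_zero.1 hradial).resolve_left hc.ne'
  rcases hcrit t hgt with hU | hV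
  · rw [hB.eq_one t hU] at hslope
    exact ⟨hU, by linarith⟩
  · rw [hB.eq_zero t hV] at hslope
    norm_num at hslope

end CollarModel

section SignedExtension

lemma encard_le_encard_add_one_of_norm_eq {E : Type*} [NormedAddCommGroup E] [NormedSpace ℝ E]
    {S U : Set E} {r : ℝ} (hS : ∀ x ∈ S, x ≠ 0 → ‖x‖ = r ∧ ‖x‖⁻¹ • x ∈ U) :
    S.encard ≤ U.encard + 1 := by
  have hmaps : MapsTo (fun x => ‖x‖⁻¹ • x) (S \ {0}) U := fun x hx => (hS x hx.1 hx.2).2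
  have hinj : InjOn (fun x => ‖x‖⁻¹ • x) (S \ {0}) := fun x hx y hy hxy => by
    have hr : r⁻¹ ≠ 0 := by
      rw [← (hS x hx.1 hx.2).1]
      exact inv_ne_zero (norm_ne_zero_iff.2 hx.2)
    simp only [(hS x hx.1 hx.2).1, (hS y hy.1 hy.2).1] at hxy
    exact smul_right_injective E hr hxy
  calc S.encard ≤ (S \ {0}).encard + ({0} : Set E).encard := encard_le_encard_sdiff_add_encard S {0}
    _ ≤ U.encard + 1 := by
      rw [encard_singleton]
      exact add_le_add_left (encard_le_encard_of_injOn hmaps hinj) 1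

/-- A smooth extension to the plane of the function `g` of the angle on the unit circle, whose
radial derivative is negative at the points of `U` and positive at the points of `V`. -/
structure IsSignedExtension (g : ℝ → ℝ) (U V : Set E2) (f : E2 → ℝ) : Prop where
  contDiff : ContDiff ℝ ∞ f
  apply_sphPt : ∀ t, f (sphPt t) = g t
  radial_neg : ∀ t, sphPt t ∈ U → fderiv ℝ f (sphPt t) (sphPt t) < 0
  radial_pos : ∀ t, sphPt t ∈ V → 0 < fderiv ℝ f (sphPt t) (sphPt t)

variable {g : ℝ → ℝ} {U V : Set E2} {f : E2 → ℝ}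

lemma IsSignedExtension.neg (hf : IsSignedExtension g U V f) :
    IsSignedExtension (-g) V U (-f) where
  contDiff := hf.contDiff.neg
  apply_sphPt t := congrArg Neg.neg (hf.apply_sphPt t)
  radial_neg t ht := by simpa [fderiv_neg] using hf.radial_pos t ht
  radial_pos t ht := by simpa [fderiv_neg] using hf.radial_neg t ht

lemma IsSignedExtension.fderiv_ne_zero (hf : IsSignedExtension g U V f)
    (hcrit : ∀ t, deriv g t = 0 → sphPt t ∈ U ∪ V) {x : E2} (hx : ‖x‖ = 1) :
    fderiv ℝ f x ≠ 0 := by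
  obtain ⟨t, rfl⟩ : ∃ t, sphPt t = x := ⟨polarAngle x, by
    simpa [hx] using norm_smul_sphPt_polarAngle x⟩
  intro h
  have hgt : deriv g t = 0 := by
    have hcomp := (hf.contDiff.differentiable (by simp) (sphPt t)).hasFDerivAt.comp_hasDerivAt t
      (contDiff_sphPt.differentiable (by simp) t).hasDerivAt
    rw [show f ∘ sphPt = g from funext hf.apply_sphPt, h] at hcomp
    exact hcomp.deriv
  rcases hcrit t hgt with hU | hV
  · simpa [h] using hf.radial_neg t hU
  · simpa [h] using hf.radial_pos t hV

lemma critPts_neg (f : E2 → ℝ) : critPts (-f) = critPts f := by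
  simp only [critPts, fderiv_neg, neg_eq_zero]

lemma isSignedExtension_polarLift_collarModel {c Q : ℝ} {M : ℕ} {B : ℝ → ℝ}
    (hg : ContDiff ℝ ∞ g) (hper : Periodic g (2 * Real.pi)) (hB : IsAngularBump g U V Q B)
    (hc : 0 < c) : IsSignedExtension g U V (polarLift (collarModel c M g B)) := by
  have hPper := periodic_collarModel (c := c) (M := M) hper hB.periodic
  have hradial (t : ℝ) : fderiv ℝ (polarLift (collarModel c M g B)) (sphPt t) (sphPt t)
      = 2 * (c * (1 - 2 * B t)) := by
    have h := fderiv_polarLift_sphPt (contDiff_uncurry_collarModel hg hB.contDiff) hPper one_pos t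
    rw [one_smul, one_pow, deriv_collarModel_radial_of_gt (by norm_num)] at h
    rw [h]
    ring
  refine ⟨contDiff_polarLift_collarModel hg hper hB.contDiff hB.periodic, fun t => ?_,
    fun t ht => ?_, fun t ht => ?_⟩
  · simpa [collarModel_one] using polarLift_smul_sphPt hPper one_pos t
  · rw [hradial, hB.eq_one t ht]
    linarith
  · rw [hradial, hB.eq_zero t ht]
    linarith

lemma exists_isSignedExtension_encard_critPts_le (hg : ContDiff ℝ ∞ g)
    (hper : Periodic g (2 * Real.pi)) (hU : IsClosed U) (hV : IsClosed V) (hUV : Disjoint U V)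
    (hcrit : ∀ t, deriv g t = 0 → sphPt t ∈ U ∪ V) :
    ∃ f, IsSignedExtension g U V f ∧ (critPts f).encard ≤ U.encard + 1 := by
  obtain ⟨Q, B, hB⟩ := exists_isAngularBump hg hper hU hV hUV hcrit
  obtain ⟨c, M, hc, hM, hQ, hinner⟩ := exists_collarModel_radial_pos hg.continuous
    Real.two_pi_pos.ne' hper hB.mem_Icc Q
  refine ⟨polarLift (collarModel c M g B),
    isSignedExtension_polarLift_collarModel hg hper hB hc, ?_⟩
  have hcrit_model (x : E2) (hx : x ∈ critPts (polarLift (collarModel c M g B))) (hx0 : x ≠ 0) :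
      sphPt (polarAngle x) ∈ U ∧ (‖x‖ ^ 2) ^ M = 1 / 2 := by
    have hnorm : 0 < ‖x‖ := norm_pos_iff.2 hx0
    have hle : ‖x‖ ^ 2 ≤ 1 := pow_le_one₀ hnorm.le (mem_ball_zero_iff.1 hx.1).le
    obtain ⟨hradial, hangular⟩ := deriv_eq_zero_of_fderiv_polarLift_eq_zero
      (contDiff_uncurry_collarModel hg hB.contDiff) (periodic_collarModel hper hB.periodic) hx0 hx.2
    exact mem_and_pow_eq_of_deriv_collarModel_eq_zero (hg.differentiable (by simp)) hcrit hB hc hQ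
      hinner ⟨sq_nonneg _, hle⟩ hradial hangular
  refine encard_le_encard_add_one_of_norm_eq (r := √((1 / 2 : ℝ) ^ (M : ℝ)⁻¹)) fun x hx hx0 => ?_
  obtain ⟨hU', hpow⟩ := hcrit_model x hx hx0
  refine ⟨?_, ?_⟩
  · rw [← hpow, Real.pow_rpow_inv_natCast (sq_nonneg _) hM, Real.sqrt_sq (norm_nonneg x)]
  · nth_rewrite 2 [← norm_smul_sphPt_polarAngle x]
    rwa [inv_smul_smul₀ (norm_ne_zero_iff.2 hx0)]

theorem stmt_1_general (hg : ContDiff ℝ ∞ g) (hper : Periodic g (2 * Real.pi)) (hU : IsClosed U)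
    (hV : IsClosed V) (hUV : Disjoint U V) (hcrit : ∀ t, deriv g t = 0 → sphPt t ∈ U ∪ V) :
    ∃ f, IsSignedExtension g U V f ∧ (critPts f).encard ≤ min U.encard V.encard + 1 := by
  rcases le_total U.encard V.encard with hle | hle
  · rw [min_eq_left hle]
    exact exists_isSignedExtension_encard_critPts_le hg hper hU hV hUV hcrit
  · rw [min_eq_right hle]
    have hcrit_neg (t : ℝ) (ht : deriv (-g) t = 0) : sphPt t ∈ V ∪ U := by
      rw [union_comm]
      exact hcrit t (by simpa [deriv.neg] using ht)
    obtain ⟨f, hf, hcard⟩ := exists_isSignedExtension_encard_critPts_le hg.neg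
      (fun t => congrArg Neg.neg (hper t)) hV hU hUV.symm hcrit_neg
    exact ⟨-f, neg_neg g ▸ hf.neg, by rwa [critPts_neg]⟩

end SignedExtension

namespace Ribbon

variable {n : ℕ} (a : Ribbon n)

/-- The `i`-th node, as a point of the unit circle. -/
def node (i : Fin n) : E2 := sphPt (a.θ i)

/-- The nodes at which the radial derivative of an extension is required to be negative: the
positive local minima and the negative local maxima. -/
def inwardNodes : Set E2 := a.node '' {i | 0 < a.ν i * deriv (deriv a.g) (a.θ i)}

/-- The nodes at which the radial derivative of an extension is required to be positive: the
positive local maxima and the negative local minima. -/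
def outwardNodes : Set E2 := a.node '' {i | a.ν i * deriv (deriv a.g) (a.θ i) < 0}

lemma node_injective : Injective a.node := fun i j hij =>
  a.values_distinct i j (eq_of_periodic_of_sphPt_eq a.periodic_g hij)

lemma isClosed_inwardNodes : IsClosed a.inwardNodes := ((toFinite _).image _).isClosed

lemma isClosed_outwardNodes : IsClosed a.outwardNodes := ((toFinite _).image _).isClosed

lemma disjoint_inwardNodes_outwardNodes : Disjoint a.inwardNodes a.outwardNodes :=
  (disjoint_image_iff a.node_injective).2 <|
    disjoint_left.2 fun _ hpos hneg => lt_asymm (mem_ofPred.1 hpos) (mem_ofPred.1 hneg)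

lemma node_mem_inwardNodes_union_outwardNodes (i : Fin n) :
    a.node i ∈ a.inwardNodes ∪ a.outwardNodes := by
  have hν : (a.ν i : ℝ) ≠ 0 := by rcases a.nu_sign i with h | h <;> simp [h]
  rcases (mul_ne_zero hν (a.node_nondeg i)).lt_or_gt with hneg | hpos
  exacts [.inr ⟨i, hneg, rfl⟩, .inl ⟨i, hpos, rfl⟩]

lemma sphPt_mem_inwardNodes_union_outwardNodes (t : ℝ) (ht : deriv a.g t = 0) :
    sphPt t ∈ a.inwardNodes ∪ a.outwardNodes := by
  have hper : Periodic (fun s => (deriv a.g s, sphPt s)) (2 * Real.pi) := fun s =>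
    Prod.ext (periodic_deriv a.periodic_g s) (periodic_sphPt s)
  obtain ⟨s, hs, hst⟩ := hper.exists_mem_Ico₀ Real.two_pi_pos t
  obtain ⟨hderiv, hpt⟩ := Prod.ext_iff.1 hst
  obtain ⟨i, rfl⟩ := a.crit_only s hs (hderiv.symm.trans ht)
  rw [show sphPt t = a.node i from hpt]
  exact a.node_mem_inwardNodes_union_outwardNodes i

lemma encard_inwardNodes_add_encard_outwardNodes_le :
    a.inwardNodes.encard + a.outwardNodes.encard ≤ n := by
  rw [← encard_union_eq a.disjoint_inwardNodes_outwardNodes, inwardNodes, outwardNodes,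
    ← image_union]
  calc (a.node '' _).encard ≤ (univ : Set (Fin n)).encard :=
        (encard_image_le _ _).trans (encard_le_encard (subset_univ _))
    _ = n := by simp

lemma min_encard_le_half : min a.inwardNodes.encard a.outwardNodes.encard ≤ (n / 2 : ℕ) := by
  have hadd := a.encard_inwardNodes_add_encard_outwardNodes_le
  generalize a.inwardNodes.encard = k, a.outwardNodes.encard = l at hadd ⊢
  lift k to ℕ using ne_top_of_le_ne_top (ENat.natCast_ne_top n) (le_self_add.trans hadd)
  lift l to ℕ using ne_top_of_le_ne_top (ENat.natCast_ne_top n) (le_add_self.trans hadd)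
  rw [min_le_iff]
  norm_cast at hadd ⊢
  lia

lemma isExtension_of_isSignedExtension {f : E2 → ℝ}
    (hf : IsSignedExtension a.g a.inwardNodes a.outwardNodes f) : IsExtension a f := by
  refine ⟨hf.contDiff, hf.apply_sphPt, fun x hx => hf.fderiv_ne_zero
    a.sphPt_mem_inwardNodes_union_outwardNodes (mem_sphere_zero_iff_norm.1 hx), fun i => ?_⟩
  have hin (h : 0 < a.ν i * deriv (deriv a.g) (a.θ i)) := hf.radial_neg (a.θ i) ⟨i, h, rfl⟩
  have hout (h : a.ν i * deriv (deriv a.g) (a.θ i) < 0) := hf.radial_pos (a.θ i) ⟨i, h, rfl⟩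
  rw [inner_gradient_left]
  rcases a.nu_sign i with hν | hν <;>
    simp only [hν, Int.cast_one, Int.cast_neg, one_mul, neg_mul,
      Left.neg_pos_iff, Left.neg_neg_iff] at hin hout ⊢
  exacts [⟨hout, hin⟩, ⟨hin, hout⟩]

lemma exists_isExtension_encard_critPts_le_min :
    ∃ f, IsExtension a f ∧
      (critPts f).encard ≤ min a.inwardNodes.encard a.outwardNodes.encard + 1 := by
  obtain ⟨f, hf, hcard⟩ := stmt_1_general a.smooth_g a.periodic_g a.isClosed_inwardNodes
    a.isClosed_outwardNodes a.disjoint_inwardNodes_outwardNodes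
    a.sphPt_mem_inwardNodes_union_outwardNodes
  exact ⟨f, a.isExtension_of_isSignedExtension hf, hcard⟩

end Ribbon

lemma gammaR_le {n : ℕ} {a : Ribbon n} {f : E2 → ℝ} (hf : IsExtension a f) :
    gammaR a ≤ (critPts f).encard :=
  sInf_le ⟨f, hf, rfl⟩

/-- For every ribbon `a` with `n` nodes there exists an extension of `a` having at most
`n/2 + 1` critical points in the open unit disk; that is, `γ(a) ≤ n/2 + 1`. -/
theorem stmt_1 (n : ℕ) (a : Ribbon n) :
    (∃ f : E2 → ℝ, IsExtension a f ∧ (critPts f).encard ≤ ((n / 2 + 1 : ℕ) : ℕ∞)) ∧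
    gammaR a ≤ ((n / 2 + 1 : ℕ) : ℕ∞) := by
  obtain ⟨f, hf, hcard⟩ := a.exists_isExtension_encard_critPts_le_min
  have hle : (critPts f).encard ≤ ((n / 2 + 1 : ℕ) : ℕ∞) :=
    hcard.trans (add_le_add_left a.min_encard_le_half 1)
  exact ⟨⟨f, hf, hle⟩, (gammaR_le hf).trans hle⟩
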